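/- Let G be a connected graph with a cut vertex and let G = H₁ ∨ H₂ be a corresponding decomposition. Then for every D_j ∈ Div(H_j) (j = 1 or 2), regarded as a divisor on G via extension by zero, one has r_{H_j}(D_j) ≥ r_G(D_j). -/

import Mathlib

/-- A finite multigraph: vertices `V`, edges `E`, each edge has an (arbitrarily
ordered) pair of endpoints.  Loops are edges whose two endpoints coincide. -/
structure Multigraph where
  V : Type
  E : Type
  [decV : DecidableEq V]
  [fintV : Fintype V]
  [decE : DecidableEq E]
  [fintE : Fintype E]
  ends : E → V × V

attribute [instance] Multigraph.decV Multigraph.fintV Multigraph.decE Multigraph.fintE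

namespace Multigraph

variable (G : Multigraph)

/-- Two vertices are adjacent if some edge joins them. -/
def Adj (v w : G.V) : Prop := ∃ e : G.E, G.ends e = (v, w) ∨ G.ends e = (w, v)

/-- A multigraph is connected if it is nonempty and any two vertices are joined by a walk. -/
def Connected : Prop := Nonempty G.V ∧ ∀ v w : G.V, Relation.ReflTransGen G.Adj v w

/-- The number of edges joining `v` and `w`. -/
def numEdges (v w : G.V) : ℕ :=
  (Finset.univ.filter fun e : G.E => G.ends e = (v, w) ∨ G.ends e = (w, v)).card

/-- The number of loops based at `v`. -/
def numLoops (v : G.V) : ℕ :=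
  (Finset.univ.filter fun e : G.E => G.ends e = (v, v)).card

/-- The valency of `v` (loops count twice). -/
def valency (v : G.V) : ℕ :=
  ∑ e : G.E, ((if (G.ends e).1 = v then 1 else 0) + (if (G.ends e).2 = v then 1 else 0))

/-- The intersection product on vertices: `(v·w)` is the number of edges joining `v` and
`w` when `v ≠ w`, and `(v·v) = -val(v) + 2 loop(v)`. -/
def inter (v w : G.V) : ℤ :=
  if v = w then -(G.valency v : ℤ) + 2 * (G.numLoops v : ℤ) else (G.numEdges v w : ℤ)

/-- The principal divisor `T_v = Σ_w (v·w) w`. -/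
def T (v : G.V) : G.V → ℤ := fun w => G.inter v w

/-- The group of principal divisors, generated by the `T_v`. -/
def Prin : AddSubgroup (G.V → ℤ) := AddSubgroup.closure (Set.range G.T)

/-- The Jacobian group `Div(G)/Prin(G)`. -/
abbrev Jac := (G.V → ℤ) ⧸ G.Prin

/-- A divisor is effective if all its coefficients are nonnegative. -/
def Effective {α : Type} (D : α → ℤ) : Prop := ∀ v, 0 ≤ D v

/-- The degree of a divisor. -/
def degree {α : Type} [Fintype α] (D : α → ℤ) : ℤ := ∑ v, D v

/-- The Baker–Norine rank of a divisor: `-1` if no effective divisor is linearly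
equivalent to `D`, and otherwise the largest `k ≥ 0` such that for every effective
divisor `E` of degree `k` some effective divisor is linearly equivalent to `D - E`. -/
noncomputable def rank (D : G.V → ℤ) : ℤ :=
  sSup {r : ℤ | r = -1 ∨ (0 ≤ r ∧ ∀ E : G.V → ℤ, Effective E → degree E = r →
      ∃ F : G.V → ℤ, Effective F ∧ D - E - F ∈ G.Prin)}

/-- An edge is a loop if its two endpoints coincide. -/
def IsLoop (e : G.E) : Prop := (G.ends e).1 = (G.ends e).2

/-- The refinement of `G` obtained by inserting `n e` new vertices in the interior of
each edge `e` (subdividing `e` into `n e + 1` edges). -/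
def subdivide (n : G.E → ℕ) : Multigraph where
  V := G.V ⊕ (Σ e : G.E, Fin (n e))
  E := Σ e : G.E, Fin (n e + 1)
  ends := fun x =>
    (if h : (x.2 : ℕ) = 0 then Sum.inl (G.ends x.1).1
        else Sum.inr ⟨x.1, ⟨(x.2 : ℕ) - 1, by have := x.2.isLt; omega⟩⟩,
     if h : (x.2 : ℕ) = n x.1 then Sum.inl (G.ends x.1).2
        else Sum.inr ⟨x.1, ⟨(x.2 : ℕ), by have := x.2.isLt; omega⟩⟩)

/-- The natural map `σ* : Div(G) → Div(G̃)` to a refinement, extending a divisor by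
zero on the new vertices. -/
def subdivMap (n : G.E → ℕ) (D : G.V → ℤ) : (G.subdivide n).V → ℤ := Sum.elim D 0

/-- `Ĝ`: the loopless refinement obtained by inserting one new vertex in the interior of
every loop-edge. -/
def hat : Multigraph := G.subdivide fun e => if (G.ends e).1 = (G.ends e).2 then 1 else 0

/-- The rank `r#_G(D) := r_{Ĝ}(σ* D)`. -/
noncomputable def rankSharp (D : G.V → ℤ) : ℤ :=
  G.hat.rank (G.subdivMap (fun e => if (G.ends e).1 = (G.ends e).2 then 1 else 0) D)

/-- A multigraph is loopless if no edge is a loop. -/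
def Loopless : Prop := ∀ e : G.E, (G.ends e).1 ≠ (G.ends e).2

/-- The genus (first Betti number) `g = |E| - |V| + 1` of a connected graph. -/
def genus : ℤ := (Fintype.card G.E : ℤ) - (Fintype.card G.V : ℤ) + 1

/-- The canonical divisor `K#_G = Σ_v (val(v) - 2) v`. -/
def canonical : G.V → ℤ := fun v => (G.valency v : ℤ) - 2

/-- The loopless graph obtained from `G` by removing all loop-edges. -/
def removeLoops : Multigraph where
  V := G.V
  E := {e : G.E // (G.ends e).1 ≠ (G.ends e).2}
  ends := fun e => G.ends e.1

/-- The virtual graph `G^ω` of a weighted graph `(G, ω)`: attach `ω v` loops at each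
vertex `v`. -/
def virt (w : G.V → ℕ) : Multigraph where
  V := G.V
  E := G.E ⊕ (Σ v : G.V, Fin (w v))
  ends := Sum.elim G.ends fun p => (p.1, p.1)

/-- The rank of a divisor on the weighted graph `(G, ω)`: `r_{(G,ω)}(D) := r#_{G^ω}(D)`. -/
noncomputable def rankW (w : G.V → ℕ) (D : G.V → ℤ) : ℤ := (G.virt w).rankSharp D

/-- The canonical divisor of the weighted graph `(G, ω)`. -/
def canonicalW (w : G.V → ℕ) : G.V → ℤ := fun v => (G.valency v : ℤ) + 2 * (w v : ℤ) - 2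

/-- The genus of the weighted graph `(G, ω)`: `b₁(G) + Σ_v ω(v)`. -/
def genusW (w : G.V → ℕ) : ℤ := G.genus + ∑ v, (w v : ℤ)

/-- The rose `R_g`: one vertex and `g` loop-edges. -/
def rose (g : ℕ) : Multigraph where
  V := Unit
  E := Fin g
  ends := fun _ => ((), ())

/-- The subgraph of `G` determined by a set of vertices and a set of edges with
endpoints among them. -/
def subgraph (Vs : Finset G.V) (Es : Finset G.E)
    (h : ∀ e ∈ Es, (G.ends e).1 ∈ Vs ∧ (G.ends e).2 ∈ Vs) : Multigraph where
  V := {x : G.V // x ∈ Vs}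
  E := {e : G.E // e ∈ Es}
  ends := fun e => (⟨(G.ends e.1).1, (h e.1 e.2).1⟩, ⟨(G.ends e.1).2, (h e.1 e.2).2⟩)

/-- Extension of a divisor on a subgraph by zero: `ι_* : Div(H) → Div(G)`. -/
def iota (Vs : Finset G.V) (D : {x : G.V // x ∈ Vs} → ℤ) : G.V → ℤ :=
  fun x => if h : x ∈ Vs then D ⟨x, h⟩ else 0

end Multigraph

namespace Multigraph

/-- A decomposition `G = H₁ ∨ H₂` of `G` associated to a cut vertex `v`:  `H₁`, `H₂` are
connected subgraphs with `V(H₁) ∩ V(H₂) = {v}`, `E(H₁) ∩ E(H₂) = ∅`, covering `G`. -/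
structure Wedge (G : Multigraph) where
  v : G.V
  V1 : Finset G.V
  V2 : Finset G.V
  hv1 : v ∈ V1
  hv2 : v ∈ V2
  E1 : Finset G.E
  E2 : Finset G.E
  cover_V : V1 ∪ V2 = Finset.univ
  inter_V : V1 ∩ V2 = {v}
  cover_E : E1 ∪ E2 = Finset.univ
  disj_E : E1 ∩ E2 = ∅
  ends1 : ∀ e ∈ E1, (G.ends e).1 ∈ V1 ∧ (G.ends e).2 ∈ V1
  ends2 : ∀ e ∈ E2, (G.ends e).1 ∈ V2 ∧ (G.ends e).2 ∈ V2
  conn1 : (G.subgraph V1 E1 ends1).Connected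
  conn2 : (G.subgraph V2 E2 ends2).Connected

/-- The first subgraph `H₁` of a wedge decomposition. -/
def Wedge.H1 {G : Multigraph} (W : G.Wedge) : Multigraph := G.subgraph W.V1 W.E1 W.ends1

/-- The second subgraph `H₂` of a wedge decomposition. -/
def Wedge.H2 {G : Multigraph} (W : G.Wedge) : Multigraph := G.subgraph W.V2 W.E2 W.ends2

variable (G : Multigraph)

/-- The divisor `div(f)` of an integer-valued function `f` on the vertices
(loops contribute zero). -/
def divOf (f : G.V → ℤ) : G.V → ℤ := fun v =>
  ∑ e : G.E, ((if (G.ends e).1 = v then f v - f (G.ends e).2 else 0)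
            + (if (G.ends e).2 = v then f v - f (G.ends e).1 else 0))

/-- An isomorphism of multigraphs (edges may be matched with either orientation). -/
structure Iso (G H : Multigraph) where
  vEquiv : G.V ≃ H.V
  eEquiv : G.E ≃ H.E
  compat : ∀ e : G.E,
    H.ends (eEquiv e) = (vEquiv (G.ends e).1, vEquiv (G.ends e).2) ∨
    H.ends (eEquiv e) = (vEquiv (G.ends e).2, vEquiv (G.ends e).1)

end Multigraph

namespace Multigraph

lemma inter_eq_sum (G : Multigraph) (v w : G.V) : G.inter v w =
    ∑ e : G.E, ((if (G.ends e).1 = v then (1:ℤ) else 0) - (if (G.ends e).2 = v then 1 else 0)) *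
      ((if (G.ends e).2 = w then (1:ℤ) else 0) - (if (G.ends e).1 = w then 1 else 0)) := by
  unfold inter
  split_ifs with h
  · subst h
    unfold valency numLoops
    rw [Finset.card_filter]
    push_cast
    rw [Finset.mul_sum, ← Finset.sum_neg_distrib, ← Finset.sum_add_distrib]
    refine Finset.sum_congr rfl fun e _ => ?_
    simp only [Prod.ext_iff]
    split_ifs <;> simp_all
  · unfold numEdges
    rw [Finset.card_filter]
    push_cast
    refine Finset.sum_congr rfl fun e _ => ?_
    simp only [Prod.ext_iff]
    split_ifs <;> simp_all

lemma degree_T (G : Multigraph) (v : G.V) : degree (G.T v) = 0 := by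
  unfold degree T
  simp only [inter_eq_sum]
  rw [Finset.sum_comm]
  refine Finset.sum_eq_zero fun e _ => ?_
  rw [← Finset.mul_sum, Finset.sum_sub_distrib]
  simp

lemma degree_sub' {α : Type} [Fintype α] (D E : α → ℤ) :
    degree (D - E) = degree D - degree E := by
  simp [degree]

lemma degree_prin (G : Multigraph) (D : G.V → ℤ) (h : D ∈ G.Prin) : degree D = 0 := by
  unfold Prin at h
  induction h using AddSubgroup.closure_induction with
  | mem x hx => obtain ⟨v, rfl⟩ := hx; exact degree_T G v
  | zero => simp [degree]
  | add x y _ _ hx hy => simp_all [degree, Finset.sum_add_distrib]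
  | neg x _ hx => simp_all [degree]

lemma rank_bdd (H : Multigraph) (v : H.V) (D : H.V → ℤ) :
    BddAbove {r : ℤ | r = -1 ∨ (0 ≤ r ∧ ∀ E : H.V → ℤ, Effective E → degree E = r →
      ∃ F : H.V → ℤ, Effective F ∧ D - E - F ∈ H.Prin)} := by
  refine ⟨max (-1) (degree D), ?_⟩
  rintro r (rfl | ⟨h0, h⟩)
  · exact le_max_left _ _
  · refine le_max_of_le_right ?_
    obtain ⟨F, hF, hp⟩ := h (Pi.single v r) (fun w => by
      by_cases hw : w = v
      · subst hw; simpa using h0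
      · simp [hw]) (by simp [degree])
    have h1 := degree_prin H _ hp
    rw [degree_sub', degree_sub'] at h1
    have h2 : degree (Pi.single v r : H.V → ℤ) = r := by simp [degree]
    have h3 : 0 ≤ degree F := Finset.sum_nonneg fun w _ => hF w
    linarith

/-- push-forward of divisors along a map of vertices -/
def push {α β : Type} [Fintype α] [DecidableEq β] (ρ : α → β) : (α → ℤ) →+ (β → ℤ) where
  toFun D w := ∑ x, if ρ x = w then D x else 0
  map_zero' := by ext; simp
  map_add' D E := by
    ext w
    simp only [Pi.add_apply, ← Finset.sum_add_distrib]
    exact Finset.sum_congr rfl fun x _ => by split_ifs <;> simp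

lemma push_T (G : Multigraph) {β : Type} [DecidableEq β] (ρ : G.V → β) (x : G.V) (w : β) :
    push ρ (G.T x) w =
    ∑ e : G.E, ((if (G.ends e).1 = x then (1:ℤ) else 0) - (if (G.ends e).2 = x then 1 else 0)) *
      ((if ρ (G.ends e).2 = w then (1:ℤ) else 0) - (if ρ (G.ends e).1 = w then 1 else 0)) := by
  have h : push ρ (G.T x) w = ∑ y, (if ρ y = w then (1:ℤ) else 0) * G.inter x y := by
    simp [push, T]
  rw [h]
  simp only [inter_eq_sum, Finset.mul_sum]
  rw [Finset.sum_comm]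
  refine Finset.sum_congr rfl fun e _ => ?_
  simp only [mul_left_comm _ (_ - _) (_ - _)]
  rw [← Finset.mul_sum]
  congr 1
  simp only [mul_sub, Finset.sum_sub_distrib]
  simp

lemma rank_subgraph_ge (G : Multigraph) (Vs : Finset G.V) (Es : Finset G.E)
    (h : ∀ e ∈ Es, (G.ends e).1 ∈ Vs ∧ (G.ends e).2 ∈ Vs) (v : G.V) (hv : v ∈ Vs)
    (h' : ∀ e ∉ Es, ((G.ends e).1 ∈ Vs → (G.ends e).1 = v) ∧
      ((G.ends e).2 ∈ Vs → (G.ends e).2 = v))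
    (D : (G.subgraph Vs Es h).V → ℤ) :
    G.rank (G.iota Vs D) ≤ (G.subgraph Vs Es h).rank D := by
  let ρ : G.V → (G.subgraph Vs Es h).V := fun x => if hx : x ∈ Vs then ⟨x, hx⟩ else ⟨v, hv⟩
  let mk : ∀ x : G.V, x ∈ Vs → (G.subgraph Vs Es h).V := fun x hx => ⟨x, hx⟩
  have hρ : ∀ (x : G.V) (hx : x ∈ Vs), ρ x = mk x hx := fun x hx => dif_pos hx
  have hρ' : ∀ x : G.V, (x ∈ Vs → x = v) → ρ x = ⟨v, hv⟩ := by
    intro x hx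
    by_cases hxs : x ∈ Vs
    · rw [hρ x hxs]; exact Subtype.ext (hx hxs)
    · exact dif_neg hxs
  have hiota : ∀ D' : (G.subgraph Vs Es h).V → ℤ, push ρ (G.iota Vs D') = D' := by
    intro D'
    ext w
    obtain ⟨w, hw⟩ := w
    change (∑ x, if ρ x = mk w hw then G.iota Vs D' x else 0) = _
    rw [Finset.sum_eq_single w]
    · rw [if_pos (hρ w hw)]; exact dif_pos hw
    · intro x _ hx
      by_cases hxs : x ∈ Vs
      · rw [if_neg]
        rw [hρ x hxs]
        intro he
        exact hx (congrArg Subtype.val he)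
      · have : G.iota Vs D' x = 0 := dif_neg hxs
        simp [this]
    · simp
  have hdeg : ∀ D' : (G.subgraph Vs Es h).V → ℤ, degree (G.iota Vs D') = degree D' := by
    intro D'
    conv_rhs => rw [← hiota D']
    unfold degree
    change _ = ∑ w, ∑ x, if ρ x = w then G.iota Vs D' x else 0
    rw [Finset.sum_comm]
    simp
  have hprin : ∀ P ∈ G.Prin, push ρ P ∈ (G.subgraph Vs Es h).Prin := by
    intro P hP
    have : G.Prin ≤ (G.subgraph Vs Es h).Prin.comap (push ρ) := by
      unfold Prin
      rw [AddSubgroup.closure_le]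
      rintro _ ⟨x, rfl⟩
      change push ρ (G.T x) ∈ (G.subgraph Vs Es h).Prin
      have key : ∀ w, push ρ (G.T x) w = ∑ e : {e // e ∈ Es},
          ((if (G.ends e.1).1 = x then (1:ℤ) else 0) - (if (G.ends e.1).2 = x then 1 else 0)) *
          ((if ρ (G.ends e.1).2 = w then (1:ℤ) else 0) -
            (if ρ (G.ends e.1).1 = w then 1 else 0)) := by
        intro w
        rw [push_T, Finset.sum_coe_sort Es (fun e =>
          ((if (G.ends e).1 = x then (1:ℤ) else 0) - (if (G.ends e).2 = x then 1 else 0)) *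
          ((if ρ (G.ends e).2 = w then (1:ℤ) else 0) -
            (if ρ (G.ends e).1 = w then 1 else 0)))]
        symm
        apply Finset.sum_subset (Finset.subset_univ _)
        intro e _ he
        rw [hρ' _ (h' e he).1, hρ' _ (h' e he).2]
        simp
      by_cases hx : x ∈ Vs
      · have : push ρ (G.T x) = (G.subgraph Vs Es h).T ⟨x, hx⟩ := by
          ext w
          refine (key w).trans (Eq.trans ?_ (inter_eq_sum (G.subgraph Vs Es h) (mk x hx) w).symm)
          refine Finset.sum_congr rfl fun e _ => ?_
          have e1 : ((G.subgraph Vs Es h).ends e).1 = mk x hx ↔ (G.ends e.1).1 = x :=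
            Subtype.ext_iff
          have e2 : ((G.subgraph Vs Es h).ends e).2 = mk x hx ↔ (G.ends e.1).2 = x :=
            Subtype.ext_iff
          have e3 : ((G.subgraph Vs Es h).ends e).1 = ρ (G.ends e.1).1 :=
            (hρ _ (h e.1 e.2).1).symm
          have e4 : ((G.subgraph Vs Es h).ends e).2 = ρ (G.ends e.1).2 :=
            (hρ _ (h e.1 e.2).2).symm
          simp only [e1, e2]
          rw [e3, e4]
        rw [this]
        exact AddSubgroup.subset_closure ⟨_, rfl⟩
      · have : push ρ (G.T x) = 0 := by
          ext w
          rw [key]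
          refine Finset.sum_eq_zero fun e _ => ?_
          have h1 : (G.ends e.1).1 ≠ x := fun hh => hx (hh ▸ (h e.1 e.2).1)
          have h2 : (G.ends e.1).2 ≠ x := fun hh => hx (hh ▸ (h e.1 e.2).2)
          simp [h1, h2]
        rw [this]
        exact zero_mem _
    exact this hP
  unfold rank
  refine csSup_le_csSup (rank_bdd (G.subgraph Vs Es h) ⟨v, hv⟩ D) ⟨-1, Or.inl rfl⟩ ?_
  rintro r (rfl | ⟨h0, hr⟩)
  · exact Or.inl rfl
  · refine Or.inr ⟨h0, fun E hE hEd => ?_⟩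
    obtain ⟨F, hF, hp⟩ := hr (G.iota Vs E) (fun x => by
      unfold iota
      split_ifs
      · exact hE _
      · exact le_rfl) ((hdeg E).trans hEd)
    refine ⟨push ρ F, fun w => Finset.sum_nonneg fun x _ => ?_, ?_⟩
    · split_ifs
      · exact hF x
      · exact le_rfl
    · have := hprin _ hp
      rwa [map_sub, map_sub, hiota, hiota] at this

end Multigraph

open Multigraph in
/-- For a cut-vertex decomposition `G = H₁ ∨ H₂` of a connected graph
and a divisor `D_j` on `H_j` regarded on `G` by extension by zero,
`r_{H_j}(D_j) ≥ r_G(D_j)`. -/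
theorem wedge_rank_subgraph_ge (G : Multigraph) (hG : G.Connected) (W : G.Wedge)
    (D1 : W.H1.V → ℤ) (D2 : W.H2.V → ℤ) :
    G.rank (G.iota W.V1 D1) ≤ W.H1.rank D1 ∧ G.rank (G.iota W.V2 D2) ≤ W.H2.rank D2 := by
  have hV : ∀ x, x ∈ W.V1 → x ∈ W.V2 → x = W.v := fun x h1 h2 => by
    have : x ∈ W.V1 ∩ W.V2 := Finset.mem_inter.2 ⟨h1, h2⟩
    rw [W.inter_V] at this
    exact Finset.mem_singleton.1 this
  have hE : ∀ e, e ∈ W.E1 ∨ e ∈ W.E2 := fun e => by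
    rw [← Finset.mem_union, W.cover_E]; exact Finset.mem_univ e
  constructor
  · refine rank_subgraph_ge G W.V1 W.E1 W.ends1 W.v W.hv1 (fun e he => ?_) D1
    have := W.ends2 e ((hE e).resolve_left he)
    exact ⟨fun h => hV _ h this.1, fun h => hV _ h this.2⟩
  · refine rank_subgraph_ge G W.V2 W.E2 W.ends2 W.v W.hv2 (fun e he => ?_) D2
    have := W.ends1 e ((hE e).resolve_right he)
    exact ⟨fun h => hV _ this.1 h, fun h => hV _ this.2 h⟩
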